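/- arXiv:2102.07366 — 4 statements merged into one kernel-verified Lean document; each statement's English description precedes it below -/
import Mathlib

section
/- Let f be L-smooth, differentiable, and μ-strongly convex (0 < μ < L) with minimizer x⋆, κ = L/μ, and γ = (√(8κ+1) + 3)/(2κ − 2). Define SC-OGM: y_{k+1} = xₖ − (1/L)∇f(xₖ), x_{k+1} = y_{k+1} + (1/(2γ+1))(y_{k+1} − yₖ) + (1/(2γ+1))(y_{k+1} − xₖ), with y₀ = x₀. Then f(yₖ) − f(x⋆) ≤ (1+γ)^{−k+1} · ((μ+2L)/2)‖x₀ − x⋆‖² for all k ≥ 1. -/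
open RealInnerProductSpace

section helpers

variable {E : Type*} [NormedAddCommGroup E] [InnerProductSpace ℝ E] [CompleteSpace E]

/-- Derivative along a line. -/
lemma ogm_line {f : E → ℝ} {f' : E → E} (hdiff : ∀ x, HasGradientAt f (f' x) x) (x v : E) (t : ℝ) :
    HasDerivAt (fun s : ℝ => f (x + s • v)) (⟪f' (x + t • v), v⟫) t := by
  have h1 : HasDerivAt (fun s : ℝ => x + s • v) v t := by
    simpa using ((hasDerivAt_id t).smul_const v).const_add x
  have h2 := (hdiff (x + t • v)).hasFDerivAt.comp_hasDerivAt t h1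
  simp at h2
  exact h2

/-- First-order strong convexity. -/
lemma ogm_sc {f : E → ℝ} {f' : E → E} {μ : ℝ} (hdiff : ∀ x, HasGradientAt f (f' x) x)
    (hs : ConvexOn ℝ Set.univ (fun x => f x - (μ / 2) * ‖x‖ ^ 2)) (x y : E) :
    f x + ⟪f' x, y - x⟫ + μ / 2 * ‖y - x‖ ^ 2 ≤ f y := by
  set v := y - x with hv
  have hy : y = x + v := by rw [hv]; abel
  have hc : ConvexOn ℝ Set.univ (fun s : ℝ => f (x + s • v) - (μ / 2) * ‖x + s • v‖ ^ 2) := by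
    have := hs.comp_affineMap (AffineMap.lineMap x y : ℝ →ᵃ[ℝ] E)
    simpa [Function.comp_def, AffineMap.lineMap_apply, ← hv, add_comm] using this
  have hsq : ∀ s : ℝ, ‖x + s • v‖ ^ 2 = ‖x‖ ^ 2 + 2 * s * ⟪x, v⟫ + s ^ 2 * ‖v‖ ^ 2 := by
    intro s
    rw [norm_add_sq_real, inner_smul_right, norm_smul, mul_pow, Real.norm_eq_abs, sq_abs]; ring
  have hd : HasDerivAt (fun s : ℝ => f (x + s • v) - (μ / 2) * ‖x + s • v‖ ^ 2)
      (⟪f' x, v⟫ - μ * ⟪x, v⟫) 0 := by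
    have h1 := ogm_line hdiff x v 0
    have h2 : HasDerivAt (fun s : ℝ => (μ / 2) * ‖x + s • v‖ ^ 2) (μ * ⟪x, v⟫) 0 := by
      simp only [hsq]
      have h3 : HasDerivAt (fun s : ℝ => (μ/2) * (‖x‖ ^ 2 + 2 * s * ⟪x, v⟫ + s ^ 2 * ‖v‖ ^ 2))
        ((μ/2) * ((2 * 1) * ⟪x, v⟫ + (2 * (0:ℝ) ^ 1 * 1) * ‖v‖ ^ 2)) 0 := by
        refine HasDerivAt.const_mul _ (HasDerivAt.add (HasDerivAt.const_add _ ?_) ?_)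
        · exact ((hasDerivAt_id (0:ℝ)).const_mul 2).mul_const _
        · simpa using ((hasDerivAt_id (0:ℝ)).pow 2).mul_const (‖v‖ ^ 2)
      convert h3 using 1
      ring
    have h4 := h1.sub h2
    simp at h4
    exact h4
  have := hc.le_slope_of_hasDerivAt (Set.mem_univ 0) (Set.mem_univ 1) one_pos hd
  rw [slope_def_field, hsq, hsq] at this
  simp only [one_smul, zero_smul, add_zero, ← hy] at this
  norm_num at this
  linarith

/-- Descent lemma. -/
lemma ogm_descent {f : E → ℝ} {f' : E → E} {L : ℝ} (hdiff : ∀ x, HasGradientAt f (f' x) x)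
    (hsm : ∀ x y, ‖f' x - f' y‖ ≤ L * ‖x - y‖) (x v : E) :
    f (x + v) ≤ f x + ⟪f' x, v⟫ + L / 2 * ‖v‖ ^ 2 := by
  have hd : ∀ t : ℝ, HasDerivAt (fun s : ℝ => f (x + s • v) - s * ⟪f' x, v⟫ - s ^ 2 * (L / 2 * ‖v‖ ^ 2))
      (⟪f' (x + t • v), v⟫ - ⟪f' x, v⟫ - 2 * t * (L / 2 * ‖v‖ ^ 2)) t := by
    intro t
    have h1 := ogm_line hdiff x v t
    have h2 := (hasDerivAt_id t).mul_const (⟪f' x, v⟫)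
    have h3 := ((hasDerivAt_id t).pow 2).mul_const (L / 2 * ‖v‖ ^ 2)
    have h4 := (h1.sub h2).sub h3
    simp at h4
    exact h4
  have hanti : AntitoneOn (fun s : ℝ => f (x + s • v) - s * ⟪f' x, v⟫ - s ^ 2 * (L / 2 * ‖v‖ ^ 2))
      (Set.Icc 0 1) := by
    refine antitoneOn_of_deriv_nonpos (convex_Icc 0 1)
      (fun t _ => (hd t).continuousAt.continuousWithinAt)
      (fun t _ => (hd t).differentiableAt.differentiableWithinAt) ?_
    intro t ht
    rw [interior_Icc] at ht
    rw [(hd t).deriv, ← inner_sub_left]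
    have h1 := real_inner_le_norm (f' (x + t • v) - f' x) v
    have h2 := hsm (x + t • v) x
    rw [add_sub_cancel_left, norm_smul, Real.norm_eq_abs, abs_of_pos ht.1] at h2
    have h3 := mul_le_mul_of_nonneg_right h2 (norm_nonneg v)
    nlinarith
  have := hanti (Set.left_mem_Icc.2 zero_le_one) (Set.right_mem_Icc.2 zero_le_one) zero_le_one
  simp at this
  linarith

/-- Cocoercivity. -/
lemma ogm_coco {f : E → ℝ} {f' : E → E} {L : ℝ} (hL : 0 < L)
    (hdiff : ∀ x, HasGradientAt f (f' x) x)
    (hsm : ∀ x y, ‖f' x - f' y‖ ≤ L * ‖x - y‖)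
    (hc : ∀ x y, f x + ⟪f' x, y - x⟫ ≤ f y) (x y : E) :
    f y + ⟪f' y, x - y⟫ + 1 / (2 * L) * ‖f' x - f' y‖ ^ 2 ≤ f x := by
  have h1 := ogm_descent hdiff hsm x (-((1 / L) • (f' x - f' y)))
  have h2 := hc y (x + -((1 / L) • (f' x - f' y)))
  have e : x + -((1 / L) • (f' x - f' y)) - y = (x - y) - (1 / L) • (f' x - f' y) := by abel
  rw [e, inner_sub_right, inner_smul_right] at h2
  rw [inner_neg_right, inner_smul_right, norm_neg, norm_smul, mul_pow, Real.norm_eq_abs, sq_abs] at h1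
  have h3 : ⟪f' x, f' x - f' y⟫ - ⟪f' y, f' x - f' y⟫ = ‖f' x - f' y‖ ^ 2 := by
    rw [← inner_sub_left, real_inner_self_eq_norm_sq]
  have h4 : L / 2 * ((1 / L) ^ 2 * ‖f' x - f' y‖ ^ 2) = 1 / (2 * L) * ‖f' x - f' y‖ ^ 2 := by
    field_simp
  have h5 : 1 / L * ‖f' x - f' y‖ ^ 2 = 2 * (1 / (2 * L) * ‖f' x - f' y‖ ^ 2) := by
    field_simp
  have h6 := congrArg (fun r => 1 / L * r) h3
  simp only [mul_sub] at h6
  linarith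

/-- One-step Lyapunov inequality; `a = w - x*`, `b = x - x*` at the new point, `g` the new gradient,
`p` the vector `y - x*`. -/
lemma ogm_step {L μ γ : ℝ} (hμ : 0 < μ) (hL : 0 < L) (hγ : 0 < γ)
    (hq : L * γ ^ 2 = μ * ((γ + 1) * (γ + 2)))
    (a b p g c : E) (φ φ' : ℝ)
    (hb : (1 + 2 * γ) • b = (1 + γ) • p + γ • a)
    (hcdef : (1 + γ) • c = a + γ • b - (γ / μ) • g)
    (hA : φ' + ⟪g, p - b⟫ + 1 / L * ‖g‖ ^ 2 ≤ φ)
    (hB : φ' + 1 / (2 * L) * ‖g‖ ^ 2 - ⟪g, b⟫ + μ / 2 * ‖b‖ ^ 2 ≤ 0) :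
    (1 + γ) * (φ' + μ / 2 * ‖c‖ ^ 2) ≤ φ + μ / 2 * ‖a‖ ^ 2 := by
  have h1 : (1 + γ) ^ 2 * ‖c‖ ^ 2 = ‖a‖ ^ 2 + γ ^ 2 * ‖b‖ ^ 2 + (γ / μ) ^ 2 * ‖g‖ ^ 2
      + 2 * γ * ⟪a, b⟫ - 2 * (γ / μ) * ⟪g, a⟫ - 2 * γ * (γ / μ) * ⟪g, b⟫ := by
    have : (1 + γ) ^ 2 * ‖c‖ ^ 2 = ‖(1 + γ) • c‖ ^ 2 := by
      rw [norm_smul, mul_pow, Real.norm_eq_abs, sq_abs]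
    rw [this, hcdef, norm_sub_sq_real, norm_add_sq_real]
    rw [inner_smul_right, inner_smul_right, inner_add_left, real_inner_smul_left,
      real_inner_comm g a, real_inner_comm g b]
    simp only [norm_smul, mul_pow, Real.norm_eq_abs, sq_abs]
    ring
  have h2 : (1 + 2 * γ) * ⟪g, b⟫ = (1 + γ) * ⟪g, p⟫ + γ * ⟪g, a⟫ := by
    have := congrArg (fun r => ⟪g, r⟫) hb
    simpa [inner_smul_right, inner_add_right] using this
  have h3 : 0 ≤ ‖a‖ ^ 2 - 2 * ⟪a, b⟫ + ‖b‖ ^ 2 := by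
    rw [← norm_sub_sq_real]; positivity
  rw [inner_sub_right] at hA
  have h4 : μ * (γ / μ) = γ := by field_simp
  have h5 : μ * (γ / μ) ^ 2 = (γ + 1) * (γ + 2) * (1 / L) := by
    field_simp
    linarith
  have h6 : 1 / (2 * L) = (1 / L) / 2 := by field_simp
  rw [h6] at hB
  generalize 1 / L = l at *
  generalize γ / μ = s at *
  generalize ⟪g, b⟫ = gb at *
  generalize ⟪g, a⟫ = ga at *
  generalize ⟪g, p⟫ = gp at *
  generalize ⟪a, b⟫ = ab at *
  generalize ‖g‖ ^ 2 = G at *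
  generalize ‖a‖ ^ 2 = A at *
  generalize ‖b‖ ^ 2 = B at *
  generalize ‖c‖ ^ 2 = C at *
  have key : (1 + γ) * ((1 + γ) * (φ' + μ / 2 * C)) ≤ (1 + γ) * (φ + μ / 2 * A) := by
    have e1 : (1 + γ) * ((1 + γ) * (φ' + μ / 2 * C)) = (1 + γ) ^ 2 * φ' + μ / 2 * ((1 + γ) ^ 2 * C) := by
      ring
    have e2 : μ / 2 * ((1 + γ) ^ 2 * C) = μ / 2 * (A + γ ^ 2 * B + 2 * γ * ab)
        + (γ + 1) * (γ + 2) * l * G / 2 - γ * ga - γ ^ 2 * gb := by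
      rw [h1]
      linear_combination (G / 2) * h5 + (- ga - γ * gb) * h4
    have hA' := mul_le_mul_of_nonneg_left hA (by positivity : 0 ≤ 1 + γ)
    have hB' := mul_le_mul_of_nonneg_left hB (by positivity : 0 ≤ (1 + γ) * γ)
    have h3' := mul_nonneg (by positivity : 0 ≤ μ / 2 * γ) h3
    rw [e1, e2]
    nlinarith
  exact le_of_mul_le_mul_left key (by positivity)

end helpers


/-- Convergence rate of SC-OGM's primary sequence:
`f(yₖ) − f⋆ ≤ (1+γ)^{−k+1} ((μ+2L)/2) ‖x₀ − x⋆‖²` for `k ≥ 1`. -/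
theorem sc_ogm_primary_rate (n : ℕ)
    (f : EuclideanSpace ℝ (Fin n) → ℝ)
    (f' : EuclideanSpace ℝ (Fin n) → EuclideanSpace ℝ (Fin n))
    (L μ : ℝ) (hμ : 0 < μ) (hμL : μ < L)
    (hdiff : ∀ x, HasGradientAt f (f' x) x)
    (hsconv : ConvexOn ℝ Set.univ (fun x => f x - (μ / 2) * ‖x‖ ^ 2))
    (hsmooth : ∀ x y, ‖f' x - f' y‖ ≤ L * ‖x - y‖)
    (xstar : EuclideanSpace ℝ (Fin n)) (hmin : ∀ y, f xstar ≤ f y)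
    (κ γ : ℝ) (hκ : κ = L / μ)
    (hγ : γ = (Real.sqrt (8 * κ + 1) + 3) / (2 * κ - 2))
    (x y : ℕ → EuclideanSpace ℝ (Fin n))
    (hx0 : y 0 = x 0)
    (hy : ∀ k, y (k + 1) = x k - (1 / L) • f' (x k))
    (hx : ∀ k, x (k + 1) = y (k + 1) + (1 / (2 * γ + 1)) • (y (k + 1) - y k)
      + (1 / (2 * γ + 1)) • (y (k + 1) - x k)) :
    ∀ k : ℕ, 1 ≤ k →
      f (y k) - f xstar
        ≤ (1 + γ) ^ (-(k : ℝ) + 1) * ((μ + 2 * L) / 2) * ‖x 0 - xstar‖ ^ 2 := by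
  have hL : 0 < L := hμ.trans hμL
  have hκ1 : 1 < κ := by rw [hκ, one_lt_div hμ]; exact hμL
  have hγ0 : 0 < γ := by
    rw [hγ]
    have := Real.sqrt_nonneg (8 * κ + 1)
    apply div_pos <;> linarith
  have hq0 : κ * γ ^ 2 = (γ + 1) * (γ + 2) := by
    have hs := Real.sq_sqrt (by linarith : 0 ≤ 8 * κ + 1)
    have hg : γ * (2 * κ - 2) = Real.sqrt (8 * κ + 1) + 3 := by
      rw [hγ]; exact div_mul_cancel₀ _ (by linarith)
    have hs' : Real.sqrt (8 * κ + 1) = γ * (2 * κ - 2) - 3 := by linarith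
    rw [hs'] at hs
    have h0 : (κ - 1) * (κ * γ ^ 2 - (γ + 1) * (γ + 2)) = 0 := by nlinarith
    rcases mul_eq_zero.1 h0 with h | h <;> linarith
  have hq : L * γ ^ 2 = μ * ((γ + 1) * (γ + 2)) := by
    rw [← hq0, hκ]; field_simp
  have hsc := ogm_sc hdiff hsconv
  have hc : ∀ x y, f x + ⟪f' x, y - x⟫ ≤ f y := fun x y => by
    have := hsc x y
    have : 0 ≤ μ / 2 * ‖y - x‖ ^ 2 := by positivity
    linarith
  have hco := ogm_coco hL hdiff hsmooth hc
  have hstar : f' xstar = 0 := by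
    have h := hco xstar (xstar - (1 / L) • f' xstar)
    have h1 := ogm_descent hdiff hsmooth xstar (-((1 / L) • f' xstar))
    have h2 := hmin (xstar + -((1 / L) • f' xstar))
    rw [inner_neg_right, inner_smul_right, norm_neg, norm_smul, mul_pow, Real.norm_eq_abs, sq_abs,
      real_inner_self_eq_norm_sq] at h1
    have h4 : L / 2 * ((1 / L) ^ 2 * ‖f' xstar‖ ^ 2) = 1 / L * ‖f' xstar‖ ^ 2 / 2 := by
      field_simp
    have h5 : 1 / L * ‖f' xstar‖ ^ 2 ≤ 0 := by linarith
    have h6 : ‖f' xstar‖ ^ 2 ≤ 0 := by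
      by_contra hcon
      push Not at hcon
      have : 0 < 1 / L * ‖f' xstar‖ ^ 2 := by positivity
      linarith
    have h7 : ‖f' xstar‖ = 0 := by nlinarith [norm_nonneg (f' xstar)]
    exact norm_eq_zero.1 h7
  -- auxiliary sequence
  let w : ℕ → EuclideanSpace ℝ (Fin n) := fun k =>
    (1 / γ) • ((γ + 1) • x k - y k - ((γ + 2) / L) • f' (x k))
  let φ : ℕ → ℝ := fun k => f (x k) - f xstar - 1 / (2 * L) * ‖f' (x k)‖ ^ 2
  have hgl : γ / μ = (γ + 2) / L * (1 + γ) / γ := by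
    field_simp; linarith
  have hstep : ∀ k, (1 + γ) * (φ (k + 1) + μ / 2 * ‖w (k + 1) - xstar‖ ^ 2)
      ≤ φ k + μ / 2 * ‖w k - xstar‖ ^ 2 := by
    intro k
    refine ogm_step hμ hL hγ0 hq (w k - xstar) (x (k + 1) - xstar) (y (k + 1) - xstar)
      (f' (x (k + 1))) (w (k + 1) - xstar) _ _ ?_ ?_ ?_ ?_
    · simp only [w]
      rw [hx k, hy k]
      match_scalars <;> field_simp <;> ring
    · simp only [w]
      rw [hgl, hx k, hy k]
      generalize f' _ = g
      match_scalars <;> field_simp <;> ring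
    · have h := hco (x k) (x (k + 1))
      have e : y (k + 1) - xstar - (x (k + 1) - xstar)
        = (x k - x (k + 1)) - (1 / L) • f' (x k) := by rw [hy k]; abel
      rw [e, inner_sub_right, inner_smul_right]
      rw [norm_sub_sq_real] at h
      simp only [φ]
      have hcm := real_inner_comm (f' (x k)) (f' (x (k + 1)))
      first | rw [← hcm] at h | rw [hcm] at h
      have h6 : 1 / (2 * L) = (1 / L) / 2 := by field_simp
      rw [h6] at h ⊢
      linarith
    · have h := hsc (x (k + 1)) xstar
      have e : xstar - x (k + 1) = -(x (k + 1) - xstar) := by abel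
      rw [e, inner_neg_right, norm_neg] at h
      simp only [φ]
      linarith
  have hind : ∀ k, (1 + γ) ^ k * (φ k + μ / 2 * ‖w k - xstar‖ ^ 2)
      ≤ φ 0 + μ / 2 * ‖w 0 - xstar‖ ^ 2 := by
    intro k
    induction k with
    | zero => simp
    | succ k ih =>
      refine le_trans ?_ ih
      rw [pow_succ, mul_assoc]
      exact mul_le_mul_of_nonneg_left (hstep k) (by positivity)
  have hinit : φ 0 + μ / 2 * ‖w 0 - xstar‖ ^ 2 ≤ (μ + 2 * L) / 2 * ‖x 0 - xstar‖ ^ 2 := by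
    have e : w 0 - xstar = (x 0 - xstar) - ((γ + 2) / (L * γ)) • f' (x 0) := by
      simp only [w]
      rw [hx0]
      match_scalars <;> field_simp <;> ring
    have h1 := ogm_descent hdiff hsmooth xstar (x 0 - xstar)
    rw [hstar, inner_zero_left, add_sub_cancel] at h1
    have h2 := hc (x 0) xstar
    have h2' := hmin (x 0)
    have e2 : xstar - x 0 = -(x 0 - xstar) := by abel
    rw [e2, inner_neg_right] at h2
    have h3 := hsmooth (x 0) xstar
    rw [hstar, sub_zero] at h3
    have h3' : ‖f' (x 0)‖ ^ 2 ≤ L ^ 2 * ‖x 0 - xstar‖ ^ 2 := by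
      rw [← mul_pow]; exact pow_le_pow_left₀ (norm_nonneg _) h3 2
    rw [e, norm_sub_sq_real, inner_smul_right, norm_smul, mul_pow, Real.norm_eq_abs, sq_abs,
      real_inner_comm]
    simp only [φ]
    have h4 : 0 ≤ μ * ((γ + 2) / (L * γ)) * ⟪f' (x 0), x 0 - xstar⟫ :=
      mul_nonneg (by positivity) (by linarith)
    have h5 : μ * ((γ + 2) / (L * γ)) ^ 2 = (1 / L) * ((γ + 2) / (γ + 1)) := by
      field_simp; linarith
    have h6 : (γ + 2) / (γ + 1) ≤ 2 := by
      rw [div_le_iff₀ (by positivity)]; linarith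
    have h7 : (1 / L) * ((γ + 2) / (γ + 1)) * ‖f' (x 0)‖ ^ 2 ≤ (1 / L) * 2 * ‖f' (x 0)‖ ^ 2 := by
      gcongr
    have h8 : (1 / L) * ‖f' (x 0)‖ ^ 2 ≤ L * ‖x 0 - xstar‖ ^ 2 := by
      calc (1 / L) * ‖f' (x 0)‖ ^ 2 ≤ (1 / L) * (L ^ 2 * ‖x 0 - xstar‖ ^ 2) := by gcongr
        _ = _ := by field_simp
    have h9 : 1 / (2 * L) = (1 / L) / 2 := by field_simp
    have h10 : μ / 2 * (((γ + 2) / (L * γ)) ^ 2 * ‖f' (x 0)‖ ^ 2)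
      = (1 / L) * ((γ + 2) / (γ + 1)) * ‖f' (x 0)‖ ^ 2 / 2 := by
      rw [← h5]; ring
    rw [h9, mul_add, h10]
    linarith
  intro k hk
  obtain ⟨m, rfl⟩ : ∃ m, k = m + 1 := ⟨k - 1, by omega⟩
  have hy1 : f (y (m + 1)) - f xstar ≤ φ m := by
    have h1 := ogm_descent hdiff hsmooth (x m) (-((1 / L) • f' (x m)))
    rw [← sub_eq_add_neg, ← hy m, inner_neg_right, inner_smul_right, norm_neg, norm_smul, mul_pow,
      Real.norm_eq_abs, sq_abs, real_inner_self_eq_norm_sq] at h1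
    have h4 : L / 2 * ((1 / L) ^ 2 * ‖f' (x m)‖ ^ 2) = 1 / (2 * L) * ‖f' (x m)‖ ^ 2 := by
      field_simp
    have h5 : 1 / L * ‖f' (x m)‖ ^ 2 = 2 * (1 / (2 * L) * ‖f' (x m)‖ ^ 2) := by
      field_simp
    simp only [φ]
    linarith
  have hpos : 0 < (1 + γ) ^ m := by positivity
  have he : (1 + γ) ^ (-((m + 1 : ℕ) : ℝ) + 1) = ((1 + γ) ^ m)⁻¹ := by
    rw [← Real.rpow_natCast, ← Real.rpow_neg (by positivity)]
    congr 1
    push_cast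
    ring
  rw [he, mul_assoc, ← div_eq_inv_mul, le_div_iff₀ hpos]
  have hfin := (hind m).trans hinit
  have hw : 0 ≤ μ / 2 * ‖w m - xstar‖ ^ 2 := by positivity
  calc (f (y (m + 1)) - f xstar) * (1 + γ) ^ m
      ≤ (1 + γ) ^ m * (φ m + μ / 2 * ‖w m - xstar‖ ^ 2) := by
        rw [mul_comm]
        exact mul_le_mul_of_nonneg_left (by linarith) hpos.le
    _ ≤ _ := hfin
end

section
/- Under the SC-OGM setup, define zₖ = ((2γ+1)/γ)xₖ − ((γ+1)/γ)yₖ and Uₖ = (1+γ)^k (f(xₖ) − f(x⋆) − (1/(2L))‖∇f(xₖ)‖² + (μ/2)‖z_{k+1} − x⋆‖²). Then the sequence {Uₖ}_{k≥0} is nonincreasing and U₀ ≤ ((μ+2L)/2)‖x₀ − x⋆‖². -/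
open RealInnerProductSpace

namespace SCOGM

variable {E : Type*} [NormedAddCommGroup E] [InnerProductSpace ℝ E] [CompleteSpace E]

lemma line_deriv {f : E → ℝ} {g : E} (x d : E) (t : ℝ) (h : HasGradientAt f g (x + t • d)) :
    HasDerivAt (fun s : ℝ => f (x + s • d)) (inner ℝ g d) t := by
  have h1 : HasDerivAt (fun s : ℝ => x + s • d) d t := by
    simpa using ((hasDerivAt_id t).smul_const d).const_add x
  have h2 := h.hasFDerivAt.comp_hasDerivAt t h1
  simp at h2
  exact h2

lemma strong_grad {f : E → ℝ} {g : E} {μ : ℝ} (x y : E) (h : HasGradientAt f g x)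
    (hc : ConvexOn ℝ Set.univ (fun x => f x - (μ / 2) * ‖x‖ ^ 2)) :
    f x + inner ℝ g (y - x) + μ / 2 * ‖y - x‖ ^ 2 ≤ f y := by
  have hl := hc.comp_affineMap (AffineMap.lineMap x y : ℝ →ᵃ[ℝ] E)
  have e : ((fun x => f x - (μ / 2) * ‖x‖ ^ 2) ∘ (AffineMap.lineMap x y : ℝ →ᵃ[ℝ] E))
      = fun s : ℝ => f (x + s • (y - x)) - (μ / 2) *
        (‖x‖ ^ 2 + 2 * s * inner ℝ x (y - x) + s ^ 2 * ‖y - x‖ ^ 2) := by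
    funext s
    have : (AffineMap.lineMap x y : ℝ →ᵃ[ℝ] E) s = x + s • (y - x) := by
      simp [AffineMap.lineMap_apply, add_comm]
    simp only [Function.comp, this, norm_add_sq_real, norm_smul, inner_smul_right, mul_pow,
      Real.norm_eq_abs, sq_abs]
    ring
  rw [e, Set.preimage_univ] at hl
  have d1 := line_deriv x (y - x) 0 (by simpa using h)
  have d2 : HasDerivAt (fun s : ℝ => (μ / 2) *
        (‖x‖ ^ 2 + 2 * s * inner ℝ x (y - x) + s ^ 2 * ‖y - x‖ ^ 2))
        (μ / 2 * (2 * inner ℝ x (y - x))) 0 := by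
    have a := ((hasDerivAt_id (0:ℝ)).const_mul 2).mul_const (inner ℝ x (y - x))
    have b := ((hasDerivAt_id (0:ℝ)).pow 2).mul_const (‖y - x‖ ^ 2)
    have c := ((a.const_add (‖x‖ ^ 2)).add b).const_mul (μ / 2)
    simpa using c
  have := hl.le_slope_of_hasDerivAt (Set.mem_univ 0) (Set.mem_univ 1) zero_lt_one (d1.sub d2)
  simp [slope_def_field] at this
  linarith

lemma descent {f : E → ℝ} {f' : E → E} {L : ℝ} (hd : ∀ x, HasGradientAt f (f' x) x)
    (hs : ∀ x y, ‖f' x - f' y‖ ≤ L * ‖x - y‖) (x y : E) :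
    f y ≤ f x + inner ℝ (f' x) (y - x) + L / 2 * ‖y - x‖ ^ 2 := by
  set d := y - x with hdd
  have D : ∀ t : ℝ, HasDerivAt (fun s : ℝ => f (x + s • d) - (s * inner ℝ (f' x) d
      + s ^ 2 * (L / 2 * ‖d‖ ^ 2)))
      (inner ℝ (f' (x + t • d)) d - (inner ℝ (f' x) d + 2 * t * (L / 2 * ‖d‖ ^ 2))) t := by
    intro t
    have a := (hasDerivAt_id t).mul_const (inner ℝ (f' x) d)
    have b := ((hasDerivAt_id t).pow 2).mul_const (L / 2 * ‖d‖ ^ 2)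
    have c := (line_deriv x d t (hd _)).sub (a.add b)
    simp at c
    exact c
  have A := antitoneOn_of_deriv_nonpos (convex_Icc (0:ℝ) 1)
    (fun t _ => (D t).continuousAt.continuousWithinAt)
    (fun t _ => (D t).differentiableAt.differentiableWithinAt)
    (fun t ht => by
      rw [(D t).deriv]
      rw [interior_Icc] at ht
      have h1 := real_inner_le_norm (f' (x + t • d) - f' x) d
      have h2 := hs (x + t • d) x
      rw [add_sub_cancel_left, norm_smul, Real.norm_eq_abs, abs_of_pos ht.1] at h2
      have h3 := mul_le_mul_of_nonneg_right h2 (norm_nonneg d)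
      rw [inner_sub_left] at h1
      linarith)
  have := A (Set.left_mem_Icc.2 zero_le_one) (Set.right_mem_Icc.2 zero_le_one) zero_le_one
  simp [hdd] at this
  linarith

lemma coco {f : E → ℝ} {f' : E → E} {L μ : ℝ} (hμ : 0 < μ) (hμL : μ < L)
    (hd : ∀ x, HasGradientAt f (f' x) x)
    (hc : ConvexOn ℝ Set.univ (fun x => f x - (μ / 2) * ‖x‖ ^ 2))
    (hs : ∀ x y, ‖f' x - f' y‖ ≤ L * ‖x - y‖) (x p : E) :
    f x + inner ℝ (f' x) (p - (1 / L) • f' p - x) + 1 / (2 * L) * ‖f' x‖ ^ 2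
      + 1 / (2 * L) * ‖f' p‖ ^ 2 ≤ f p := by
  have hL : 0 < L := hμ.trans hμL
  have h1 := descent hd hs p (p - (1 / L) • (f' p - f' x))
  have h2 := strong_grad x (p - (1 / L) • (f' p - f' x)) (hd x) hc
  have h3 : 0 ≤ μ / 2 * ‖p - (1 / L) • (f' p - f' x) - x‖ ^ 2 := by positivity
  rw [show p - (1 / L) • (f' p - f' x) - p = -((1 / L) • (f' p - f' x)) by abel] at h1
  simp only [norm_neg, norm_smul, mul_pow, inner_neg_right, inner_smul_right, inner_sub_right,
    norm_sub_sq_real, Real.norm_eq_abs, sq_abs, real_inner_self_eq_norm_sq] at h1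
  rw [show p - (1 / L) • (f' p - f' x) - x = p - x - (1 / L) • (f' p - f' x) by abel] at h2
  simp only [inner_sub_right, inner_smul_right, real_inner_self_eq_norm_sq] at h2 ⊢
  rw [real_inner_comm (f' p) (f' x)] at *
  have e : L / 2 * ((1 / L) ^ 2 * (‖f' p‖ ^ 2 - 2 * inner ℝ (f' p) (f' x) + ‖f' x‖ ^ 2))
     = 1 / L * (‖f' p‖ ^ 2 - 2 * inner ℝ (f' p) (f' x) + ‖f' x‖ ^ 2) / 2 := by
    field_simp
  have e2 : 1 / (2 * L) = 1 / L / 2 := by field_simp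
  rw [e2]
  have e3 := real_inner_comm (f' p) (f' x)
  have : 0 ≤ μ / 2 * ‖p - x - (1 / L) • (f' p - f' x)‖ ^ 2 := by positivity
  simp only [e3] at *
  linarith

end SCOGM

open SCOGM

/-- Lyapunov monotonicity for SC-OGM, together with the bound on the
initial Lyapunov value. -/
theorem sc_ogm_lyapunov_monotone (n : ℕ)
    (f : EuclideanSpace ℝ (Fin n) → ℝ)
    (f' : EuclideanSpace ℝ (Fin n) → EuclideanSpace ℝ (Fin n))
    (L μ : ℝ) (hμ : 0 < μ) (hμL : μ < L)
    (hdiff : ∀ x, HasGradientAt f (f' x) x)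
    (hsconv : ConvexOn ℝ Set.univ (fun x => f x - (μ / 2) * ‖x‖ ^ 2))
    (hsmooth : ∀ x y, ‖f' x - f' y‖ ≤ L * ‖x - y‖)
    (xstar : EuclideanSpace ℝ (Fin n)) (hmin : ∀ y, f xstar ≤ f y)
    (κ γ : ℝ) (hκ : κ = L / μ)
    (hγ : γ = (Real.sqrt (8 * κ + 1) + 3) / (2 * κ - 2))
    (x y z : ℕ → EuclideanSpace ℝ (Fin n))
    (hx0 : y 0 = x 0)
    (hy : ∀ k, y (k + 1) = x k - (1 / L) • f' (x k))
    (hx : ∀ k, x (k + 1) = y (k + 1) + (1 / (2 * γ + 1)) • (y (k + 1) - y k)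
      + (1 / (2 * γ + 1)) • (y (k + 1) - x k))
    (hz : ∀ k, z k = ((2 * γ + 1) / γ) • x k - ((γ + 1) / γ) • y k)
    (U : ℕ → ℝ)
    (hU : ∀ k, U k = (1 + γ) ^ k * (f (x k) - f xstar - (1 / (2 * L)) * ‖f' (x k)‖ ^ 2
      + (μ / 2) * ‖z (k + 1) - xstar‖ ^ 2)) :
    (∀ k, U (k + 1) ≤ U k) ∧ U 0 ≤ ((μ + 2 * L) / 2) * ‖x 0 - xstar‖ ^ 2 := by
  have hL : 0 < L := hμ.trans hμL
  have hκ1 : 1 < κ := by rw [hκ, one_lt_div hμ]; exact hμL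
  have hγ0 : 0 < γ := by
    rw [hγ]; apply div_pos
    · positivity
    · linarith
  have hs : Real.sqrt (8 * κ + 1) = γ * (2 * κ - 2) - 3 := by
    rw [hγ, div_mul_cancel₀ _ (by linarith)]; ring
  have hsq := Real.sq_sqrt (show 0 ≤ 8 * κ + 1 by linarith)
  have hq : κ * γ ^ 2 = (γ + 1) * (γ + 2) := by
    rw [hs] at hsq
    have : (κ - 1) * (κ * γ ^ 2 - (γ + 1) * (γ + 2)) = 0 := by linarith
    rcases mul_eq_zero.1 this with h | h <;> linarith
  have hLq : L * γ ^ 2 = μ * ((γ + 1) * (γ + 2)) := by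
    rw [← hq, hκ]; field_simp
  have hLe : L = μ * ((γ + 1) * (γ + 2)) / γ ^ 2 := by
    rw [← hLq]; field_simp
  have hzs : ∀ k, z (k + 1) = (1 / (1 + γ)) • (z k + γ • x k - (γ / μ) • f' (x k)) := by
    intro k
    rw [hz (k + 1), hz k, hx k, hy k, hLe]
    match_scalars <;> field_simp <;> ring
  have hyx : ∀ k, y k - x k = -(γ / (1 + γ)) • (z k - x k) := by
    intro k
    rw [hz k]
    match_scalars <;> field_simp <;> ring
  have hg0 : f' xstar = 0 := by
    have h1 := descent hdiff hsmooth xstar (xstar - (1 / L) • f' xstar)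
    have h2 := hmin (xstar - (1 / L) • f' xstar)
    rw [show xstar - (1 / L) • f' xstar - xstar = -((1 / L) • f' xstar) by abel] at h1
    simp only [norm_neg, norm_smul, mul_pow, inner_neg_right, inner_smul_right,
      Real.norm_eq_abs, sq_abs, real_inner_self_eq_norm_sq] at h1
    have e : L / 2 * ((1 / L) ^ 2 * ‖f' xstar‖ ^ 2) = 1 / L * ‖f' xstar‖ ^ 2 / 2 := by
      field_simp
    have h3 : 1 / L * ‖f' xstar‖ ^ 2 ≤ 0 := by linarith
    have h4 : 0 < 1 / L := by positivity
    have h5 : ‖f' xstar‖ ^ 2 ≤ 0 := by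
      by_contra h; push Not at h
      have := mul_pos h4 h; linarith
    have h6 : ‖f' xstar‖ = 0 := by
      have := sq_nonneg ‖f' xstar‖
      exact pow_eq_zero_iff (two_ne_zero) |>.1 (le_antisymm h5 this)
    exact norm_eq_zero.1 h6
  have hzn : ∀ k, (1 + γ) * (μ / 2 * ‖z (k + 1) - xstar‖ ^ 2) ≤
      μ / 2 * ‖z k - xstar‖ ^ 2 + γ * (μ / 2 * ‖xstar - x k‖ ^ 2)
      + inner ℝ (f' (x k)) (y k - x k) + γ * inner ℝ (f' (x k)) (xstar - x k)
      + (γ + 2) * (1 / (2 * L) * ‖f' (x k)‖ ^ 2) := by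
    intro k
    rw [hyx k, hzs k]
    set g := f' (x k)
    obtain ⟨a, ha⟩ : ∃ a, a = z k - xstar := ⟨_, rfl⟩
    obtain ⟨b, hb⟩ : ∃ b, b = x k - xstar := ⟨_, rfl⟩
    rw [show (1 / (1 + γ)) • (z k + γ • x k - (γ / μ) • g) - xstar
      = (1 / (1 + γ)) • ((a + γ • b) - (γ / μ) • g) by
        rw [ha, hb]; match_scalars <;> field_simp <;> ring,
      show z k - x k = a - b by rw [ha, hb]; abel,
      show xstar - x k = -b by rw [hb]; abel, ← ha]
    have hab : 0 ≤ ‖a - b‖ ^ 2 := by positivity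
    rw [norm_sub_sq_real] at hab
    simp only [norm_neg, norm_smul, mul_pow, inner_neg_right, inner_smul_right, inner_sub_right,
      norm_sub_sq_real, norm_add_sq_real, inner_add_left, real_inner_smul_left,
      Real.norm_eq_abs, sq_abs]
    rw [real_inner_comm g a, real_inner_comm g b, hLe]
    generalize ‖a‖ ^ 2 = A at *
    generalize ‖b‖ ^ 2 = B at *
    generalize ‖g‖ ^ 2 = G at *
    generalize (inner ℝ a b : ℝ) = p at *
    generalize (inner ℝ a g : ℝ) = q at *
    generalize (inner ℝ b g : ℝ) = r at *
    have key : 0 ≤ μ / 2 * (γ / (1 + γ)) * (A - 2 * p + B) := by positivity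
    rw [← sub_nonneg]
    refine key.trans_eq ?_
    field_simp
    ring
  constructor
  · intro k
    rw [hU, hU, pow_succ, mul_assoc]
    apply mul_le_mul_of_nonneg_left _ (by positivity)
    have h1 := coco hμ hμL hdiff hsconv hsmooth (x (k + 1)) (x k)
    rw [← hy k] at h1
    have h2 := strong_grad (x (k + 1)) xstar (hdiff _) hsconv
    have h3 := hzn (k + 1)
    have h4 := mul_le_mul_of_nonneg_left h2 hγ0.le
    linarith
  · rw [hU]
    have hz0 : z 0 = x 0 := by
      rw [hz, hx0]; match_scalars; field_simp; ring
    have h1 := descent hdiff hsmooth xstar (x 0)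
    have h2 := hsmooth (x 0) xstar
    rw [hg0, inner_zero_left] at h1
    rw [hg0, sub_zero] at h2
    have h3 := strong_grad (x 0) xstar (hdiff _) hsconv
    have h4 : ‖f' (x 0)‖ ^ 2 ≤ L ^ 2 * ‖x 0 - xstar‖ ^ 2 := by
      rw [← mul_pow]; gcongr
    have h5 := hmin (x 0)
    have h6 := hzn 0
    rw [hx0, sub_self, inner_zero_right, hz0, norm_sub_rev xstar] at h6
    rw [norm_sub_rev xstar] at h3
    have h7 : 1 / (2 * L) * ‖f' (x 0)‖ ^ 2 ≤ L / 2 * ‖x 0 - xstar‖ ^ 2 := by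
      calc _ ≤ 1 / (2 * L) * (L ^ 2 * ‖x 0 - xstar‖ ^ 2) := by gcongr
        _ = _ := by field_simp
    have h8 : 0 ≤ μ / 2 * ‖x 0 - xstar‖ ^ 2 := by positivity
    rw [pow_zero, one_mul]
    have h9 : inner ℝ (f' (x 0)) (xstar - x 0) ≤ 0 := by linarith
    have h10 : γ * inner ℝ (f' (x 0)) (xstar - x 0) ≤ 0 :=
      mul_nonpos_of_nonneg_of_nonpos hγ0.le h9
    have hγ1 : 0 < 1 + γ := by linarith
    have h11 : (1 + γ) * (f (x 0) - f xstar) ≤ (1 + γ) * (L / 2 * ‖x 0 - xstar‖ ^ 2) :=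
      mul_le_mul_of_nonneg_left (by linarith) hγ1.le
    have h12 : 0 ≤ γ * (L / 2 * ‖x 0 - xstar‖ ^ 2) := by positivity
    refine le_of_mul_le_mul_left ?_ hγ1
    linarith
end

section
/- Under the SC-OGM setup, the secondary sequence satisfies f(xₖ) − f(x⋆) ≤ ((1+γ)^{−k+2}/(2γ)) · ((μ+2L)/2)‖x₀ − x⋆‖² for all k ≥ 1. -/
open RealInnerProductSpace

section SCOGM
variable {E : Type*} [NormedAddCommGroup E] [InnerProductSpace ℝ E] [CompleteSpace E]

lemma scogm_line {f : E → ℝ} {f' : E → E} (hdiff : ∀ x, HasGradientAt f (f' x) x)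
    (x d : E) (t : ℝ) :
    HasDerivAt (fun s : ℝ => f (x + s • d)) (inner ℝ (f' (x + t • d)) d) t := by
  have h1 : HasDerivAt (fun s : ℝ => x + s • d) d t := by
    simpa using ((hasDerivAt_id t).smul_const d).const_add x
  have h2 := (hdiff (x + t • d)).hasFDerivAt
  exact (h2.comp_hasDerivAt t h1).congr_deriv (by simp)

lemma scogm_descent {f : E → ℝ} {f' : E → E} {L : ℝ}
    (hdiff : ∀ x, HasGradientAt f (f' x) x)
    (hsmooth : ∀ x y, ‖f' x - f' y‖ ≤ L * ‖x - y‖) (x d : E) :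
    f (x + d) ≤ f x + inner ℝ (f' x) d + L / 2 * ‖d‖ ^ 2 := by
  have hd : ∀ t : ℝ, HasDerivAt
      (fun s : ℝ => f (x + s • d) - (s * inner ℝ (f' x) d + L / 2 * ‖d‖ ^ 2 * s ^ 2))
      (inner ℝ (f' (x + t • d)) d - (inner ℝ (f' x) d + L * ‖d‖ ^ 2 * t)) t := by
    intro t
    have h1 := scogm_line hdiff x d t
    have h2 : HasDerivAt (fun s : ℝ => s * inner ℝ (f' x) d + L / 2 * ‖d‖ ^ 2 * s ^ 2)
        (inner ℝ (f' x) d + L * ‖d‖ ^ 2 * t) t := by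
      have := ((hasDerivAt_id t).mul_const (inner ℝ (f' x) d)).add
        (((hasDerivAt_id t).pow 2).const_mul (L / 2 * ‖d‖ ^ 2))
      refine this.congr_deriv ?_
      simp
      ring
    exact h1.sub h2
  have hanti : AntitoneOn
      (fun s : ℝ => f (x + s • d) - (s * inner ℝ (f' x) d + L / 2 * ‖d‖ ^ 2 * s ^ 2))
      (Set.Ici 0) := by
    apply antitoneOn_of_deriv_nonpos (convex_Ici 0)
    · exact fun t _ => (hd t).continuousAt.continuousWithinAt
    · exact fun t _ => (hd t).differentiableAt.differentiableWithinAt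
    · intro t ht
      rw [interior_Ici, Set.mem_Ioi] at ht
      rw [(hd t).deriv]
      have h1 : inner ℝ (f' (x + t • d) - f' x) d ≤ ‖f' (x + t • d) - f' x‖ * ‖d‖ :=
        real_inner_le_norm _ _
      have h2 := hsmooth (x + t • d) x
      rw [add_sub_cancel_left, norm_smul, Real.norm_eq_abs, abs_of_pos ht] at h2
      have h3 := mul_le_mul_of_nonneg_right h2 (norm_nonneg d)
      rw [inner_sub_left] at h1
      nlinarith
  have := hanti (Set.mem_Ici.2 le_rfl) (Set.mem_Ici.2 zero_le_one) zero_le_one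
  simp at this
  linarith

lemma scogm_sc {f : E → ℝ} {f' : E → E} {μ : ℝ}
    (hdiff : ∀ x, HasGradientAt f (f' x) x)
    (hsconv : ConvexOn ℝ Set.univ (fun x => f x - (μ / 2) * ‖x‖ ^ 2)) (x d : E) :
    f x + inner ℝ (f' x) d + μ / 2 * ‖d‖ ^ 2 ≤ f (x + d) := by
  have hexp : ∀ s : ℝ, ‖x + s • d‖ ^ 2 = ‖x‖ ^ 2 + 2 * s * inner ℝ x d + s ^ 2 * ‖d‖ ^ 2 := by
    intro s
    rw [norm_add_sq_real, inner_smul_right, norm_smul, mul_pow, Real.norm_eq_abs, sq_abs]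
    ring
  have hc : ConvexOn ℝ Set.univ (fun s : ℝ => f (x + s • d) - (μ / 2) * ‖x + s • d‖ ^ 2) := by
    have := hsconv.comp_affineMap (AffineMap.lineMap x (x + d) : ℝ →ᵃ[ℝ] E)
    simpa [Function.comp_def, AffineMap.lineMap_apply, add_comm] using this
  have hd : HasDerivAt (fun s : ℝ => f (x + s • d) - (μ / 2) * ‖x + s • d‖ ^ 2)
      (inner ℝ (f' x) d - μ * inner ℝ x d) 0 := by
    have h1 := scogm_line hdiff x d 0
    have h2 : HasDerivAt (fun s : ℝ => (μ / 2) * ‖x + s • d‖ ^ 2) (μ * inner ℝ x d) 0 := by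
      simp_rw [hexp]
      have := ((((hasDerivAt_id (0:ℝ)).const_mul 2).mul_const (inner ℝ x d)).const_add
        (‖x‖ ^ 2)).add (((hasDerivAt_id (0:ℝ)).pow 2).mul_const (‖d‖ ^ 2))
      refine (this.const_mul (μ / 2)).congr_deriv ?_
      simp
      ring
    exact (h1.sub h2).congr_deriv (by simp)
  have := hc.le_slope_of_hasDerivAt (Set.mem_univ 0) (Set.mem_univ 1) zero_lt_one hd
  rw [slope_def_field] at this
  have h1 := hexp 1
  simp at this h1
  rw [h1] at this
  linarith

lemma scogm_coco {f : E → ℝ} {f' : E → E} {L μ : ℝ} (hL : 0 < L) (hμ : 0 < μ)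
    (hdiff : ∀ x, HasGradientAt f (f' x) x)
    (hsconv : ConvexOn ℝ Set.univ (fun x => f x - (μ / 2) * ‖x‖ ^ 2))
    (hsmooth : ∀ x y, ‖f' x - f' y‖ ≤ L * ‖x - y‖) (x w : E) :
    f w + inner ℝ (f' w) (x - w) + 1 / (2 * L) * ‖f' x - f' w‖ ^ 2 ≤ f x := by
  have h1 := scogm_descent hdiff hsmooth x (-((1 / L) • (f' x - f' w)))
  have h2 := scogm_sc hdiff hsconv w (x - w - (1 / L) • (f' x - f' w))
  have h0 : 0 ≤ μ / 2 * ‖x - w - (1 / L) • (f' x - f' w)‖ ^ 2 := by positivity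
  have he : w + (x - w - (1 / L) • (f' x - f' w)) = x + -((1 / L) • (f' x - f' w)) := by abel
  rw [he] at h2
  have h3 : inner ℝ (f' x) (f' x - f' w) - inner ℝ (f' w) (f' x - f' w) = ‖f' x - f' w‖ ^ 2 := by
    rw [← inner_sub_left, real_inner_self_eq_norm_sq]
  rw [inner_sub_right, inner_smul_right] at h2
  rw [inner_neg_right, inner_smul_right, norm_neg, norm_smul, mul_pow, Real.norm_eq_abs, sq_abs] at h1
  have h4 : L / 2 * ((1 / L) ^ 2 * ‖f' x - f' w‖ ^ 2) = 1 / (2 * L) * ‖f' x - f' w‖ ^ 2 := by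
    field_simp
  have h5 : 1 / L * inner ℝ (f' x) (f' x - f' w) - 1 / L * inner ℝ (f' w) (f' x - f' w)
      = 2 * (1 / (2 * L) * ‖f' x - f' w‖ ^ 2) := by
    rw [← mul_sub, h3]; field_simp
  linarith

/-- One step: with `w` the new point, `Φ` an upper bound from the previous step. -/
lemma scogm_step {L μ γ Φ fw : ℝ} (hL : 0 < L) (hμ : 0 < μ) (hγ : 0 < γ)
    (hrel : L * γ ^ 2 = μ * ((1 + γ) * (2 + γ))) (g w y z z' : E)
    (hA : fw + inner ℝ g (y - w) + 1 / (2 * L) * ‖g‖ ^ 2 ≤ Φ)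
    (hB : fw - inner ℝ g w + μ / 2 * ‖w‖ ^ 2 ≤ 0)
    (hw : (1 + 2 * γ) • w = (1 + γ) • y + γ • z)
    (hz : (1 + γ) • z' = z + γ • w - (γ / μ) • g) :
    (1 + γ) * (fw - 1 / (2 * L) * ‖g‖ ^ 2 + μ / 2 * ‖z'‖ ^ 2) ≤ Φ + μ / 2 * ‖z‖ ^ 2 := by
  have hy : y = (1 / (1 + γ)) • ((1 + 2 * γ) • w - γ • z) := by
    rw [hw, add_sub_cancel_right, smul_smul, one_div_mul_cancel (by positivity), one_smul]
  have hz2 : z' = (1 / (1 + γ)) • (z + γ • w - (γ / μ) • g) := by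
    rw [← hz, smul_smul, one_div_mul_cancel (by positivity), one_smul]
  have hLe : 1 / (2 * L) = γ ^ 2 / (2 * μ * ((1 + γ) * (2 + γ))) := by
    rw [div_eq_div_iff (by positivity) (by positivity)]; linarith
  have e1 : ‖z'‖ ^ 2 = (1 / (1 + γ)) ^ 2 * (‖z‖ ^ 2 + γ ^ 2 * ‖w‖ ^ 2 + (γ / μ) ^ 2 * ‖g‖ ^ 2
      + 2 * γ * inner ℝ w z - 2 * (γ / μ) * inner ℝ g z - 2 * γ * (γ / μ) * inner ℝ g w) := by
    rw [hz2]
    simp only [← real_inner_self_eq_norm_sq, inner_add_left, inner_add_right, inner_sub_left,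
      inner_sub_right, real_inner_smul_left, real_inner_smul_right]
    rw [real_inner_comm w z, real_inner_comm g z, real_inner_comm g w]
    ring
  have e2 : inner ℝ g (y - w) = γ / (1 + γ) * (inner ℝ g w - inner ℝ g z) := by
    rw [hy]
    simp only [inner_sub_right, real_inner_smul_right]
    field_simp
    ring
  have e3 : 0 ≤ ‖z‖ ^ 2 - 2 * inner ℝ w z + ‖w‖ ^ 2 := by
    have := sq_nonneg ‖z - w‖
    rw [norm_sub_sq_real, real_inner_comm] at this
    linarith
  rw [e1]
  rw [e2] at hA
  have key : Φ + μ / 2 * ‖z‖ ^ 2 - (1 + γ) * (fw - 1 / (2 * L) * ‖g‖ ^ 2 + μ / 2 *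
      ((1 / (1 + γ)) ^ 2 * (‖z‖ ^ 2 + γ ^ 2 * ‖w‖ ^ 2 + (γ / μ) ^ 2 * ‖g‖ ^ 2
      + 2 * γ * inner ℝ w z - 2 * (γ / μ) * inner ℝ g z - 2 * γ * (γ / μ) * inner ℝ g w)))
      = (Φ - (fw + γ / (1 + γ) * (inner ℝ g w - inner ℝ g z) + 1 / (2 * L) * ‖g‖ ^ 2))
        + γ * (-(fw - inner ℝ g w + μ / 2 * ‖w‖ ^ 2))
        + μ * γ / (2 * (1 + γ)) * (‖z‖ ^ 2 - 2 * inner ℝ w z + ‖w‖ ^ 2) := by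
    rw [hLe]
    field_simp
    ring
  have t1 : 0 ≤ γ * (-(fw - inner ℝ g w + μ / 2 * ‖w‖ ^ 2)) :=
    mul_nonneg hγ.le (by linarith)
  have t2 : 0 ≤ μ * γ / (2 * (1 + γ)) * (‖z‖ ^ 2 - 2 * inner ℝ w z + ‖w‖ ^ 2) :=
    mul_nonneg (by positivity) e3
  linarith

lemma scogm_final {L μ γ Φ fw : ℝ} (hL : 0 < L) (hμ : 0 < μ) (hγ : 0 < γ)
    (hrel : L * γ ^ 2 = μ * ((1 + γ) * (2 + γ))) (g w y z : E)
    (hA : fw + inner ℝ g (y - w) + 1 / (2 * L) * ‖g‖ ^ 2 ≤ Φ)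
    (hB : fw - inner ℝ g w + μ / 2 * ‖w‖ ^ 2 ≤ 0)
    (hC : 1 / (2 * L) * ‖g‖ ^ 2 ≤ fw)
    (hw : (1 + 2 * γ) • w = (1 + γ) • y + γ • z) :
    2 * γ * fw ≤ (1 + γ) * (Φ + μ / 2 * ‖z‖ ^ 2) := by
  have hy : y = (1 / (1 + γ)) • ((1 + 2 * γ) • w - γ • z) := by
    rw [hw, add_sub_cancel_right, smul_smul, one_div_mul_cancel (by positivity), one_smul]
  have hLe : 1 / (2 * L) = γ ^ 2 / (2 * μ * ((1 + γ) * (2 + γ))) := by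
    rw [div_eq_div_iff (by positivity) (by positivity)]; linarith
  have e2 : inner ℝ g (y - w) = γ / (1 + γ) * (inner ℝ g w - inner ℝ g z) := by
    rw [hy]
    simp only [inner_sub_right, real_inner_smul_right]
    field_simp
    ring
  have hw0 : 0 ≤ μ / 2 * ‖w‖ ^ 2 := by positivity
  have e3 : 0 ≤ (γ / (1 + γ)) ^ 2 * ‖g‖ ^ 2 - 2 * (γ / (1 + γ)) * μ * inner ℝ g z
      + μ ^ 2 * ‖z‖ ^ 2 := by
    have := sq_nonneg ‖(γ / (1 + γ)) • g - μ • z‖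
    rw [norm_sub_sq_real, norm_smul, norm_smul, mul_pow, mul_pow, Real.norm_eq_abs,
      Real.norm_eq_abs, sq_abs, sq_abs, real_inner_smul_left, real_inner_smul_right] at this
    linarith
  rw [e2] at hA
  have key : (1 + γ) * (Φ + μ / 2 * ‖z‖ ^ 2) - 2 * γ * fw
      = (1 + γ) * (Φ - (fw + γ / (1 + γ) * (inner ℝ g w - inner ℝ g z) + 1 / (2 * L) * ‖g‖ ^ 2))
        + γ * (-(fw - inner ℝ g w)) + (fw - 1 / (2 * L) * ‖g‖ ^ 2)
        + (1 + γ) / (2 * μ) * ((γ / (1 + γ)) ^ 2 * ‖g‖ ^ 2 - 2 * (γ / (1 + γ)) * μ * inner ℝ g z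
      + μ ^ 2 * ‖z‖ ^ 2) := by
    rw [hLe]
    field_simp
    ring
  have t0 := mul_nonneg (by positivity : 0 ≤ 1 + γ) (sub_nonneg.2 hA)
  have t1 : 0 ≤ γ * (-(fw - inner ℝ g w)) :=
    mul_nonneg hγ.le (by linarith)
  have t2 := mul_nonneg (by positivity : 0 ≤ (1 + γ) / (2 * μ)) e3
  linarith

end SCOGM

/-- Convergence rate of SC-OGM's secondary (x) sequence:
`f(xₖ) − f⋆ ≤ ((1+γ)^{−k+2}/(2γ)) ((μ+2L)/2) ‖x₀ − x⋆‖²` for `k ≥ 1`. -/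
theorem sc_ogm_secondary_rate (n : ℕ)
    (f : EuclideanSpace ℝ (Fin n) → ℝ)
    (f' : EuclideanSpace ℝ (Fin n) → EuclideanSpace ℝ (Fin n))
    (L μ : ℝ) (hμ : 0 < μ) (hμL : μ < L)
    (hdiff : ∀ x, HasGradientAt f (f' x) x)
    (hsconv : ConvexOn ℝ Set.univ (fun x => f x - (μ / 2) * ‖x‖ ^ 2))
    (hsmooth : ∀ x y, ‖f' x - f' y‖ ≤ L * ‖x - y‖)
    (xstar : EuclideanSpace ℝ (Fin n)) (hmin : ∀ y, f xstar ≤ f y)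
    (κ γ : ℝ) (hκ : κ = L / μ)
    (hγ : γ = (Real.sqrt (8 * κ + 1) + 3) / (2 * κ - 2))
    (x y : ℕ → EuclideanSpace ℝ (Fin n))
    (hx0 : y 0 = x 0)
    (hy : ∀ k, y (k + 1) = x k - (1 / L) • f' (x k))
    (hx : ∀ k, x (k + 1) = y (k + 1) + (1 / (2 * γ + 1)) • (y (k + 1) - y k)
      + (1 / (2 * γ + 1)) • (y (k + 1) - x k)) :
    ∀ k : ℕ, 1 ≤ k →
      f (x k) - f xstar
        ≤ ((1 + γ) ^ (-(k : ℝ) + 2) / (2 * γ)) * ((μ + 2 * L) / 2)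
          * ‖x 0 - xstar‖ ^ 2 := by
  have hL : 0 < L := hμ.trans hμL
  have hκ1 : 1 < κ := by rw [hκ, lt_div_iff₀ hμ]; linarith
  have hγ0 : 0 < γ := by
    rw [hγ]
    exact div_pos (by positivity) (by linarith)
  have hrel : L * γ ^ 2 = μ * ((1 + γ) * (2 + γ)) := by
    have hs := Real.sq_sqrt (show 0 ≤ 8 * κ + 1 by linarith)
    have h1 : Real.sqrt (8 * κ + 1) = γ * (2 * κ - 2) - 3 := by
      rw [hγ, div_mul_cancel₀ _ (by linarith)]; ring
    rw [h1] at hs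
    have h2 : (κ - 1) * (κ * γ ^ 2 - (1 + γ) * (2 + γ)) = 0 := by linarith
    have h3 : κ * γ ^ 2 - (1 + γ) * (2 + γ) = 0 :=
      (mul_eq_zero.1 h2).resolve_left (by linarith)
    have h4 : L = κ * μ := by rw [hκ]; field_simp
    rw [h4]
    linear_combination μ * h3
  have hgs : f' xstar = 0 := by
    have hl : IsLocalMin f xstar := Filter.Eventually.of_forall hmin
    have := hl.hasFDerivAt_eq_zero (hdiff xstar).hasFDerivAt
    simpa using this
  have hB : ∀ w, (f w - f xstar) - inner ℝ (f' w) (w - xstar) + μ / 2 * ‖w - xstar‖ ^ 2 ≤ 0 := by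
    intro w
    have := scogm_sc hdiff hsconv w (xstar - w)
    rw [add_sub_cancel, norm_sub_rev, ← neg_sub w xstar, inner_neg_right] at this
    linarith
  have hC : ∀ w, 1 / (2 * L) * ‖f' w‖ ^ 2 ≤ f w - f xstar := by
    intro w
    have := scogm_coco hL hμ hdiff hsconv hsmooth w xstar
    rw [hgs, inner_zero_left, sub_zero] at this
    linarith
  set z : ℕ → EuclideanSpace ℝ (Fin n) :=
    fun k => (1 / γ) • ((1 + 2 * γ) • x k - (1 + γ) • y k) with hzdef
  have hγz : ∀ k, γ • z k = (1 + 2 * γ) • x k - (1 + γ) • y k := by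
    intro k
    simp only [hzdef]
    rw [smul_smul, mul_one_div_cancel hγ0.ne', one_smul]
  have hw : ∀ k, (1 + 2 * γ) • (x k - xstar) = (1 + γ) • (y k - xstar) + γ • (z k - xstar) := by
    intro k
    rw [smul_sub γ, hγz]
    module
  have hLi : 1 / L = γ ^ 2 / (μ * ((1 + γ) * (2 + γ))) := by
    rw [div_eq_div_iff (by positivity) (by positivity)]; linarith
  have hz : ∀ k, (1 + γ) • (z (k + 1) - xstar)
      = (z k - xstar) + γ • (x k - xstar) - (γ / μ) • f' (x k) := by
    intro k
    simp only [hzdef]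
    rw [hx k, hy k, hLi]
    match_scalars <;> field_simp <;> ring
  set D : ℝ := (μ + 2 * L) / 2 * ‖x 0 - xstar‖ ^ 2 with hD
  have main : ∀ k, ∃ Φ : ℝ, (f (x k) - f xstar) + inner ℝ (f' (x k)) ((y k - xstar) - (x k - xstar))
      + 1 / (2 * L) * ‖f' (x k)‖ ^ 2 ≤ Φ ∧
      (1 + γ) ^ k * (Φ + μ / 2 * ‖z k - xstar‖ ^ 2) ≤ D := by
    intro k
    induction k with
    | zero =>
      refine ⟨(f (x 0) - f xstar) + 1 / (2 * L) * ‖f' (x 0)‖ ^ 2, by simp [hx0], ?_⟩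
      have hz0 : z 0 = x 0 := by
        simp only [hzdef]
        rw [hx0]
        match_scalars
        field_simp
        ring
      have h1 := scogm_descent hdiff hsmooth xstar (x 0 - xstar)
      rw [hgs, inner_zero_left, add_sub_cancel] at h1
      have h2 := hsmooth (x 0) xstar
      rw [hgs, sub_zero] at h2
      have h3 := pow_le_pow_left₀ (norm_nonneg _) h2 2
      have h4 := mul_le_mul_of_nonneg_left h3 (by positivity : 0 ≤ 1 / (2 * L))
      have h5 : 1 / (2 * L) * (L * ‖x 0 - xstar‖) ^ 2 = L / 2 * ‖x 0 - xstar‖ ^ 2 := by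
        field_simp
      rw [hz0, pow_zero, one_mul, hD]
      linarith
    | succ k ih =>
      obtain ⟨Φ, hA, hV⟩ := ih
      refine ⟨(f (x k) - f xstar) - 1 / (2 * L) * ‖f' (x k)‖ ^ 2, ?_, ?_⟩
      · have h1 := scogm_coco hL hμ hdiff hsconv hsmooth (x k) (x (k + 1))
        have h2 : x k = y (k + 1) + (1 / L) • f' (x k) := by rw [hy k]; abel
        have h3 : inner ℝ (f' (x (k + 1))) (x k - x (k + 1))
            = inner ℝ (f' (x (k + 1))) (y (k + 1) - x (k + 1))
              + 1 / L * inner ℝ (f' (x (k + 1))) (f' (x k)) := by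
          rw [← real_inner_smul_right, ← inner_add_right, hy k]
          congr 1
          abel
        rw [h3, norm_sub_sq_real, real_inner_comm (f' (x (k + 1))) (f' (x k))] at h1
        rw [sub_sub_sub_cancel_right]
        have h4 : 1 / L = 2 * (1 / (2 * L)) := by field_simp
        rw [h4] at h1
        linarith
      · have := scogm_step hL hμ hγ0 hrel (f' (x k)) (x k - xstar) (y k - xstar) (z k - xstar)
          (z (k + 1) - xstar) hA (hB _) (hw k) (hz k)
        have h2 := mul_le_mul_of_nonneg_left this (by positivity : 0 ≤ (1 + γ) ^ k)
        rw [pow_succ]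
        linarith
  intro k _
  obtain ⟨Φ, hA, hV⟩ := main k
  have hfin := scogm_final hL hμ hγ0 hrel (f' (x k)) (x k - xstar) (y k - xstar) (z k - xstar)
    hA (hB _) (hC _) (hw k)
  have hp : (1 + γ) ^ (-(k : ℝ) + 2) = (1 + γ) ^ 2 / (1 + γ) ^ k := by
    rw [Real.rpow_add (by positivity), Real.rpow_neg (by positivity), Real.rpow_natCast]
    norm_num
    field_simp
  have hD0 : 0 ≤ D := by rw [hD]; positivity
  have hpk : 0 < (1 + γ) ^ k := by positivity
  rw [hp, mul_assoc, ← hD, div_div, div_mul_eq_mul_div, le_div_iff₀ (by positivity)]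
  have h1 := mul_le_mul_of_nonneg_left hfin hpk.le
  have h2 := mul_le_mul_of_nonneg_left hV (by positivity : 0 ≤ 1 + γ)
  have h3 : 0 ≤ γ * (1 + γ) * D := by positivity
  nlinarith
end

section
/- Consider the linear coupling method with quadratic norm Q: y_{k+1} = xₖ − L⁻¹Q⁻¹∇f(xₖ), z_{k+1} = argmin_y {V_{zₖ}(y) + ⟨α_{k+1}∇f(xₖ), y − xₖ⟩}, x_{k+1} = (1−τ_{k+1})y_{k+1} + τ_{k+1}z_{k+1}, x₀ = z₀, with α₁ = 2/L, 0 ≤ α_{k+1}²L − 2α_{k+1} ≤ αₖ²L, and τₖ = 2/(α_{k+1}L) ∈ (0,1]. Then f(yₖ) − f(x⋆) ≤ 2V_{x₀}(x⋆)/(Lαₖ²) for all k ≥ 1. -/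
open RealInnerProductSpace

lemma line_deriv {E : Type*} [NormedAddCommGroup E] [InnerProductSpace ℝ E] [CompleteSpace E]
    {f : E → ℝ} {g x d : E} {t : ℝ} (h : HasGradientAt f g (x + t • d)) :
    HasDerivAt (fun s : ℝ => f (x + s • d)) ⟪g, d⟫ t := by
  have h1 : HasDerivAt (fun s : ℝ => x + s • d) d t := by
    simpa using ((hasDerivAt_id t).smul_const d).const_add x
  have h2 := h.hasFDerivAt.comp_hasDerivAt t h1
  simpa [Function.comp_def] using h2

lemma conv_line {E : Type*} [NormedAddCommGroup E] [InnerProductSpace ℝ E]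
    {f : E → ℝ} (hf : ConvexOn ℝ Set.univ f) {x d : E} {c : ℝ}
    (h : HasDerivAt (fun s : ℝ => f (x + s • d)) c 0) : f x + c ≤ f (x + d) := by
  have hc : ConvexOn ℝ Set.univ (fun s : ℝ => f (x + s • d)) := by
    refine ⟨convex_univ, ?_⟩
    intro a _ b _ p q hp hq hpq
    have := hf.2 (Set.mem_univ (x + a • d)) (Set.mem_univ (x + b • d)) hp hq hpq
    convert this using 2
    have : x = (p + q) • x := by rw [hpq, one_smul]
    nth_rewrite 1 [this]
    simp only [smul_eq_mul]
    module
  have := hc.le_slope_of_hasDerivAt (Set.mem_univ 0) (Set.mem_univ 1) one_pos h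
  simp [slope_def_field] at this
  linarith

lemma young {E : Type*} [NormedAddCommGroup E] [InnerProductSpace ℝ E]
    (Q Qinv : E →L[ℝ] E)
    (hsymm : ∀ x y, ⟪Q x, y⟫ = ⟪x, Q y⟫)
    (hpd : ∀ x, x ≠ 0 → 0 < ⟪x, Q x⟫)
    (hinv₁ : ∀ x, Q (Qinv x) = x) (u d : E) (a : ℝ) :
    2 * a * ⟪u, d⟫ ≤ a ^ 2 * ⟪u, Qinv u⟫ + ⟪d, Q d⟫ := by
  have h0 : ∀ v, 0 ≤ ⟪v, Q v⟫ := by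
    intro v
    by_cases hv : v = 0
    · simp [hv]
    · exact (hpd v hv).le
  have h := h0 (d - a • Qinv u)
  have e : ⟪Qinv u, Q d⟫ = ⟪u, d⟫ := by rw [← hsymm, hinv₁]
  simp only [map_sub, map_smul, hinv₁, inner_sub_left, inner_sub_right, inner_smul_left,
    inner_smul_right, e, real_inner_comm u d, real_inner_comm u (Qinv u)] at h
  simp at h
  have e2 := real_inner_comm u d
  have e3 := real_inner_comm u (Qinv u)
  nlinarith

lemma descent {E : Type*} [NormedAddCommGroup E] [InnerProductSpace ℝ E] [CompleteSpace E]
    (Q Qinv : E →L[ℝ] E)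
    (hsymm : ∀ x y, ⟪Q x, y⟫ = ⟪x, Q y⟫)
    (hpd : ∀ x, x ≠ 0 → 0 < ⟪x, Q x⟫)
    (hinv₁ : ∀ x, Q (Qinv x) = x)
    (f : E → ℝ) (f' : E → E) (L : ℝ) (hL : 0 < L)
    (hdiff : ∀ x, HasGradientAt f (f' x) x)
    (hsmooth : ∀ x y, Real.sqrt ⟪f' x - f' y, Qinv (f' x - f' y)⟫
      ≤ L * Real.sqrt ⟪x - y, Q (x - y)⟫) (x d : E) :
    f (x + d) ≤ f x + ⟪f' x, d⟫ + L / 2 * ⟪d, Q d⟫ := by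
  have h0 : ∀ v, 0 ≤ ⟪v, Q v⟫ := by
    intro v
    by_cases hv : v = 0
    · simp [hv]
    · exact (hpd v hv).le
  have h0' : ∀ v, 0 ≤ ⟪v, Qinv v⟫ := by
    intro v
    have := h0 (Qinv v)
    rwa [hinv₁, real_inner_comm] at this
  have hsq : ∀ x y, ⟪f' x - f' y, Qinv (f' x - f' y)⟫ ≤ L ^ 2 * ⟪x - y, Q (x - y)⟫ := by
    intro x y
    have h := pow_le_pow_left₀ (Real.sqrt_nonneg _) (hsmooth x y) 2
    rwa [mul_pow, Real.sq_sqrt (h0' _), Real.sq_sqrt (h0 _)] at h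
  have hder : ∀ t : ℝ, HasDerivAt
      (fun s : ℝ => f (x + s • d) - (s * ⟪f' x, d⟫ + L / 2 * ⟪d, Q d⟫ * s ^ 2))
      (⟪f' (x + t • d), d⟫ - (⟪f' x, d⟫ + L / 2 * ⟪d, Q d⟫ * (2 * t))) t := by
    intro t
    have a1 := line_deriv (hdiff (x + t • d))
    have a2 := (hasDerivAt_id t).mul_const ⟪f' x, d⟫
    have a3 := (hasDerivAt_pow 2 t).const_mul (L / 2 * ⟪d, Q d⟫)
    have a4 := a1.sub (a2.add a3)
    exact a4.congr_deriv (by simp)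
  have hanti : AntitoneOn
      (fun s : ℝ => f (x + s • d) - (s * ⟪f' x, d⟫ + L / 2 * ⟪d, Q d⟫ * s ^ 2))
      (Set.Ici 0) := by
    refine antitoneOn_of_deriv_nonpos (convex_Ici 0)
      (fun t _ => (hder t).continuousAt.continuousWithinAt)
      (fun t _ => (hder t).differentiableAt.differentiableWithinAt) ?_
    intro t ht
    rw [interior_Ici, Set.mem_Ioi] at ht
    rw [(hder t).deriv]
    have b1 := hsq (x + t • d) x
    have b2 := young Q Qinv hsymm hpd hinv₁ (f' (x + t • d) - f' x) (t • d) (1 / L)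
    simp only [add_sub_cancel_left, map_smul, inner_smul_left, inner_smul_right,
      inner_sub_left (f' (x + t • d)) (f' x) d] at b1 b2
    simp only [RCLike.conj_to_real] at b1 b2
    set G := ⟪f' (x + t • d) - f' x, Qinv (f' (x + t • d) - f' x)⟫
    set A := ⟪f' (x + t • d), d⟫
    set B := ⟪f' x, d⟫
    set D := ⟪d, Q d⟫
    have b3 : (1 / L) ^ 2 * G ≤ t * (t * D) := by
      rw [div_pow, one_pow, one_div, inv_mul_le_iff₀ (by positivity)]
      exact b1
    have b4 : 2 * (1 / L) * (t * (A - B)) ≤ 2 * (t * (t * D)) := by linarith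
    have b5 : (1 / L) * (A - B) ≤ t * D := by
      by_contra hcon
      push Not at hcon
      have := mul_lt_mul_of_pos_left hcon ht
      nlinarith
    rw [one_div, inv_mul_le_iff₀ hL] at b5
    linarith
  have := hanti (Set.mem_Ici.2 le_rfl) (Set.mem_Ici.2 zero_le_one) zero_le_one
  simp at this
  linarith

lemma coco {E : Type*} [NormedAddCommGroup E] [InnerProductSpace ℝ E] [CompleteSpace E]
    (Q Qinv : E →L[ℝ] E)
    (hsymm : ∀ x y, ⟪Q x, y⟫ = ⟪x, Q y⟫)
    (hpd : ∀ x, x ≠ 0 → 0 < ⟪x, Q x⟫)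
    (hinv₁ : ∀ x, Q (Qinv x) = x)
    (f : E → ℝ) (f' : E → E) (L : ℝ) (hL : 0 < L)
    (hdiff : ∀ x, HasGradientAt f (f' x) x)
    (hconv : ConvexOn ℝ Set.univ f)
    (hsmooth : ∀ x y, Real.sqrt ⟪f' x - f' y, Qinv (f' x - f' y)⟫
      ≤ L * Real.sqrt ⟪x - y, Q (x - y)⟫) (x y : E) :
    f x + ⟪f' x, y - x⟫ + 1 / (2 * L) * ⟪f' y - f' x, Qinv (f' y - f' x)⟫ ≤ f y := by
  set u := f' y - f' x with hu
  have h1 := descent Q Qinv hsymm hpd hinv₁ f f' L hL hdiff hsmooth y (-((1 / L) • Qinv u))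
  have h2 : f x + ⟪f' x, (y - x) + -((1 / L) • Qinv u)⟫
      ≤ f (x + ((y - x) + -((1 / L) • Qinv u))) :=
    conv_line hconv (line_deriv (by simpa using hdiff x))
  have e : x + ((y - x) + -((1 / L) • Qinv u)) = y + -((1 / L) • Qinv u) := by abel
  rw [e] at h2
  have e2 : ⟪f' y, Qinv u⟫ - ⟪f' x, Qinv u⟫ = ⟪u, Qinv u⟫ := by rw [hu, inner_sub_left]
  simp only [inner_add_right, inner_neg_right, inner_neg_left, map_neg, map_smul, hinv₁,
    inner_smul_left, inner_smul_right, real_inner_comm u (Qinv u)] at h1 h2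
  simp only [RCLike.conj_to_real] at h1 h2
  have e3 := real_inner_comm u (Qinv u)
  have e4 : L / 2 * - -(1 / L * (1 / L * ⟪u, Qinv u⟫)) = 1 / (2 * L) * ⟪u, Qinv u⟫ := by
    field_simp
  have e5 : 1 / L * ⟪f' y, Qinv u⟫ - 1 / L * ⟪f' x, Qinv u⟫
      = 2 * (1 / (2 * L) * ⟪u, Qinv u⟫) := by
    rw [← e2]; field_simp
  simp only [e3] at *
  linarith

lemma mirror {E : Type*} [NormedAddCommGroup E] [InnerProductSpace ℝ E] [CompleteSpace E]
    (Q Qinv : E →L[ℝ] E)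
    (hsymm : ∀ x y, ⟪Q x, y⟫ = ⟪x, Q y⟫)
    (hpd : ∀ x, x ≠ 0 → 0 < ⟪x, Q x⟫)
    (hinv₁ : ∀ x, Q (Qinv x) = x)
    (w : E → ℝ) (w' : E → E)
    (hwdiff : ∀ x, HasGradientAt w (w' x) x)
    (hV2 : ∀ a b, w a + ⟪w' a, b - a⟫ + (1 / 2) * ⟪b - a, Q (b - a)⟫ ≤ w b)
    (V : E → E → ℝ)
    (hV : ∀ a b, V a b = w b - ⟪w' a, b - a⟫ - w a)
    (a : ℝ) (g x z z1 s : E)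
    (hz : IsMinOn (fun u => V z u + a * ⟪g, u - x⟫) Set.univ z1) :
    a * ⟪g, z - s⟫ ≤ V z s - V z1 s + a ^ 2 / 2 * ⟪g, Qinv g⟫ := by
  have hopt : ∀ d, ⟪w' z1, d⟫ - ⟪w' z, d⟫ + a * ⟪g, d⟫ = 0 := by
    intro d
    have h1 : HasDerivAt (fun t : ℝ => w (z1 + t • d)) ⟪w' z1, d⟫ 0 :=
      line_deriv (by simpa using hwdiff z1)
    have h2 := (hasDerivAt_id (0 : ℝ)).mul_const (a * ⟪g, d⟫ - ⟪w' z, d⟫)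
    have h3 := h1.add h2
    have hm : IsLocalMin ((fun t : ℝ => w (z1 + t • d)) +
        fun t : ℝ => id t * (a * ⟪g, d⟫ - ⟪w' z, d⟫)) 0 := by
      refine Filter.Eventually.of_forall fun t => ?_
      have h := isMinOn_iff.1 hz (z1 + t • d) (Set.mem_univ _)
      simp only [hV, inner_sub_right, inner_add_right, inner_smul_right] at h
      simp
      linarith
    have := hm.hasDerivAt_eq_zero h3
    simp at this
    linarith
  have h1 := hopt (z1 - s)
  have h2 := hV2 z z1
  have h3 := young Q Qinv hsymm hpd hinv₁ g (z - z1) a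
  have h4 : ⟪z - z1, Q (z - z1)⟫ = ⟪z1 - z, Q (z1 - z)⟫ := by
    rw [← neg_sub z1 z, map_neg, inner_neg_neg]
  rw [h4] at h3
  simp only [hV, inner_sub_right (w' _), inner_sub_right g] at *
  linarith

/-- Convergence rate of OGM derived via linear coupling with a quadratic norm
`‖x‖² = ⟨x, Qx⟩` and a Bregman divergence `V` generated by a 1-strongly convex
distance generating function `w`:
`f(yₖ) − f⋆ ≤ 2V_{x₀}(x⋆)/(Lαₖ²)` for `k ≥ 1`. -/
theorem lc_ogm_rate (n : ℕ)
    (Q Qinv : EuclideanSpace ℝ (Fin n) →L[ℝ] EuclideanSpace ℝ (Fin n))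
    (hsymm : ∀ x y, ⟪Q x, y⟫ = ⟪x, Q y⟫)
    (hpd : ∀ x, x ≠ 0 → 0 < ⟪x, Q x⟫)
    (hinv₁ : ∀ x, Q (Qinv x) = x) (hinv₂ : ∀ x, Qinv (Q x) = x)
    (f : EuclideanSpace ℝ (Fin n) → ℝ)
    (f' : EuclideanSpace ℝ (Fin n) → EuclideanSpace ℝ (Fin n))
    (L : ℝ) (hL : 0 < L)
    (hdiff : ∀ x, HasGradientAt f (f' x) x)
    (hconv : ConvexOn ℝ Set.univ f)
    (hsmooth : ∀ x y, Real.sqrt ⟪f' x - f' y, Qinv (f' x - f' y)⟫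
      ≤ L * Real.sqrt ⟪x - y, Q (x - y)⟫)
    (xstar : EuclideanSpace ℝ (Fin n)) (hmin : ∀ y, f xstar ≤ f y)
    (w : EuclideanSpace ℝ (Fin n) → ℝ)
    (w' : EuclideanSpace ℝ (Fin n) → EuclideanSpace ℝ (Fin n))
    (hwdiff : ∀ x, HasGradientAt w (w' x) x)
    (hwsc : ConvexOn ℝ Set.univ (fun x => w x - (1 / 2) * ⟪x, Q x⟫))
    (V : EuclideanSpace ℝ (Fin n) → EuclideanSpace ℝ (Fin n) → ℝ)
    (hV : ∀ a b, V a b = w b - ⟪w' a, b - a⟫ - w a)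
    (α τ : ℕ → ℝ)
    (hα1 : α 1 = 2 / L) (hαpos : ∀ k, 1 ≤ k → 0 < α k)
    (hαrec : ∀ k, 1 ≤ k → 0 ≤ α (k + 1) ^ 2 * L - 2 * α (k + 1) ∧
      α (k + 1) ^ 2 * L - 2 * α (k + 1) ≤ α k ^ 2 * L)
    (hτ : ∀ k, 1 ≤ k → τ k = 2 / (α (k + 1) * L) ∧ 0 < τ k ∧ τ k ≤ 1)
    (x y z : ℕ → EuclideanSpace ℝ (Fin n))
    (hx0 : x 0 = z 0)
    (hy : ∀ k, y (k + 1) = x k - (1 / L) • Qinv (f' (x k)))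
    (hz : ∀ k, IsMinOn (fun u => V (z k) u + α (k + 1) * ⟪f' (x k), u - x k⟫)
      Set.univ (z (k + 1)))
    (hx : ∀ k, x (k + 1) = (1 - τ (k + 1)) • y (k + 1) + τ (k + 1) • z (k + 1)) :
    ∀ k, 1 ≤ k → f (y k) - f xstar ≤ 2 * V (x 0) xstar / (L * α k ^ 2) := by
  have hsc : ∀ a b, w a + ⟪w' a, b - a⟫ + (1 / 2) * ⟪b - a, Q (b - a)⟫ ≤ w b := by
    intro a b
    set d := b - a with hd
    have hb : b = a + d := by rw [hd]; abel
    have h1 : HasDerivAt (fun t : ℝ => w (a + t • d)) ⟪w' a, d⟫ 0 :=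
      line_deriv (by simpa using hwdiff a)
    have hs : ⟪d, Q a⟫ = ⟪a, Q d⟫ := by rw [← hsymm, real_inner_comm]
    have hq : ∀ t : ℝ, ⟪a + t • d, Q (a + t • d)⟫
        = ⟪a, Q a⟫ + t * (2 * ⟪a, Q d⟫) + ⟪d, Q d⟫ * t ^ 2 := by
      intro t
      simp only [map_add, map_smul, inner_add_left, inner_add_right, inner_smul_left,
        inner_smul_right, hs, RCLike.conj_to_real]
      ring
    have h2 : HasDerivAt (fun t : ℝ => w (a + t • d) - (1 / 2) * ⟪a + t • d, Q (a + t • d)⟫)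
        (⟪w' a, d⟫ - ⟪a, Q d⟫) 0 := by
      have hfun : (fun t : ℝ => w (a + t • d) - (1 / 2) * ⟪a + t • d, Q (a + t • d)⟫)
          = fun t : ℝ => w (a + t • d) - (1 / 2) *
            (⟪a, Q a⟫ + t * (2 * ⟪a, Q d⟫) + ⟪d, Q d⟫ * t ^ 2) := by
        funext t
        rw [hq]
      rw [hfun]
      have a2 := (hasDerivAt_id (0 : ℝ)).mul_const (2 * ⟪a, Q d⟫)
      have a3 := (hasDerivAt_pow 2 (0 : ℝ)).const_mul ⟪d, Q d⟫
      have a4 := h1.sub (((a2.const_add ⟪a, Q a⟫).add a3).const_mul (1 / 2))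
      exact a4.congr_deriv (by simp)
    have h3 := conv_line hwsc h2
    have h4 := hq 1
    simp only [one_smul] at h4
    simp only [h4] at h3
    rw [hb]
    linarith
  have hQ0 : ∀ v, 0 ≤ ⟪v, Q v⟫ := by
    intro v
    by_cases hv : v = 0
    · simp [hv]
    · exact (hpd v hv).le
  have hV0 : ∀ a b, 0 ≤ V a b := by
    intro a b
    have := hsc a b
    have := hQ0 (b - a)
    rw [hV]; linarith
  have hco := coco Q Qinv hsymm hpd hinv₁ f f' L hL hdiff hconv hsmooth
  have hmir := fun k => mirror Q Qinv hsymm hpd hinv₁ w w' hwdiff hsc V hV (α (k + 1))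
    (f' (x k)) (x k) (z k) (z (k + 1)) xstar (hz k)
  have hstar : f' xstar = 0 := by
    have h1 : HasDerivAt (fun t : ℝ => f (xstar + t • f' xstar)) ⟪f' xstar, f' xstar⟫ 0 :=
      line_deriv (by simpa using hdiff xstar)
    have hm : IsLocalMin (fun t : ℝ => f (xstar + t • f' xstar)) 0 :=
      Filter.Eventually.of_forall fun t => by simpa using hmin _
    exact inner_self_eq_zero.1 (hm.hasDerivAt_eq_zero h1)
  set N : ℕ → ℝ := fun k => ⟪f' (x k), Qinv (f' (x k))⟫ with hN
  set D : ℕ → ℝ := fun k => f (x k) - 1 / (2 * L) * N k - f xstar with hD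
  have hfy : ∀ k, f (y (k + 1)) - f xstar ≤ D k := by
    intro k
    have h := descent Q Qinv hsymm hpd hinv₁ f f' L hL hdiff hsmooth (x k)
      (-((1 / L) • Qinv (f' (x k))))
    rw [← sub_eq_add_neg, ← hy] at h
    simp only [inner_neg_right, inner_neg_left, map_neg, map_smul, hinv₁,
      inner_smul_left, inner_smul_right, RCLike.conj_to_real] at h
    rw [real_inner_comm] at h
    have e3 : ⟪Qinv (f' (x k)), f' (x k)⟫ = N k := real_inner_comm _ _
    have e3' : ⟪f' (x k), Qinv (f' (x k))⟫ = N k := rfl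
    simp only [e3, e3'] at h
    have e4 : -(1 / L * N k) + L / 2 * - -(1 / L * (1 / L * N k)) = - (1 / (2 * L) * N k) := by
      field_simp; ring
    simp only [hD]
    linarith
  have hD0 : ∀ k, 0 ≤ D k := fun k => by
    have := hfy k
    have := hmin (y (k + 1))
    linarith
  have hopt : ∀ k, f (x k) - f xstar + 1 / (2 * L) * N k ≤ ⟪f' (x k), x k - xstar⟫ := by
    intro k
    have h := hco (x k) xstar
    rw [hstar, zero_sub, map_neg, inner_neg_neg, ← neg_sub (x k) xstar, inner_neg_right] at h
    change _ + 1 / (2 * L) * N k ≤ _ at h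
    linarith
  have hmain : ∀ k, α (k + 1) ^ 2 * L / 2 * D k + V (z (k + 1)) xstar ≤ V (x 0) xstar := by
    intro k
    induction k with
    | zero =>
      have h1 := hmir 0
      have h2 := hopt 0
      rw [← hx0] at h1
      rw [zero_add, hα1] at *
      have h3 := mul_le_mul_of_nonneg_left h2 (show 0 ≤ 2 / L by positivity)
      have e1 : (2 / L) ^ 2 * L / 2 * D 0
        = 2 / L * (f (x 0) - f xstar + 1 / (2 * L) * N 0) - (2 / L) ^ 2 / 2 * N 0 := by
        simp only [hD]; field_simp; ring
      rw [e1]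
      change _ ≤ _ + (2 / L) ^ 2 / 2 * N 0 at h1
      linarith
    | succ k ih =>
      have h1 := hmir (k + 1)
      have h2 := hopt (k + 1)
      obtain ⟨r1, r2⟩ := hαrec (k + 1) (by omega)
      obtain ⟨t1, t2, t3⟩ := hτ (k + 1) (by omega)
      have ha := hαpos (k + 1 + 1) (by omega)
      set a := α (k + 1 + 1) with hadef
      have hc := hco (x (k + 1)) (x k)
      have hxe : x (k + 1) - z (k + 1) = (a * L / 2 - 1) • (y (k + 1) - x (k + 1)) := by
        have e1 : a * L / 2 * τ (k + 1) = 1 := by rw [t1]; field_simp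
        rw [hx k]
        match_scalars <;> first | linear_combination (-1 : ℝ) * e1 | linear_combination e1
      have hin : ⟪f' (x (k + 1)), y (k + 1) - x (k + 1)⟫ ≤ D k - D (k + 1) - 1 / L * N (k + 1) := by
        have hs : ⟪f' (x k), Qinv (f' (x (k + 1)))⟫ = ⟪f' (x (k + 1)), Qinv (f' (x k))⟫ := by
          conv_lhs => rw [← hinv₁ (f' (x k)), hsymm, hinv₁, real_inner_comm]
        have hy1 := hy k
        have e : y (k + 1) - x (k + 1) = (x k - x (k + 1)) - (1 / L) • Qinv (f' (x k)) := by
          rw [hy1]; abel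
        rw [e, inner_sub_right, inner_smul_right]
        rw [map_sub] at hc
        simp only [inner_sub_left (f' _) (f' _), inner_sub_right _ (Qinv _) (Qinv _), hs] at hc
        have e5 : 1 / L = 2 * (1 / (2 * L)) := by field_simp
        rw [e5]
        simp only [hD, hN]
        linarith
      have hmul := mul_le_mul_of_nonneg_left hin
        (show 0 ≤ a * (a * L / 2 - 1) by linarith [r1, show a * (a * L / 2 - 1) = (a ^ 2 * L - 2 * a) / 2 by ring])
      have hsplit : ⟪f' (x (k + 1)), x (k + 1) - xstar⟫
          = (a * L / 2 - 1) * ⟪f' (x (k + 1)), y (k + 1) - x (k + 1)⟫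
            + ⟪f' (x (k + 1)), z (k + 1) - xstar⟫ := by
        rw [← real_inner_smul_right, ← hxe, ← inner_add_right]
        congr 1; abel
      have h3 := mul_le_mul_of_nonneg_left h2 ha.le
      rw [hsplit] at h3
      have h4 := mul_le_mul_of_nonneg_right r2 (hD0 k)
      change _ ≤ _ + a ^ 2 / 2 * N (k + 1) at h1
      have e6 : f (x (k + 1)) - f xstar + 1 / (2 * L) * N (k + 1)
          = D (k + 1) + 1 / L * N (k + 1) := by
        simp only [hD]; field_simp; ring
      rw [e6] at h3
      have e7 : a * (a * L / 2 - 1) * (1 / L * N (k + 1)) + a * (1 / L * N (k + 1))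
          = a ^ 2 / 2 * N (k + 1) := by field_simp; ring
      linarith
  intro k hk
  obtain ⟨j, rfl⟩ : ∃ j, k = j + 1 := ⟨k - 1, by omega⟩
  have h1 := hmain j
  have h2 := hfy j
  have h3 := hV0 (z (j + 1)) xstar
  have ha := hαpos (j + 1) hk
  rw [le_div_iff₀ (by positivity)]
  have h4 := mul_le_mul_of_nonneg_right h2 (show 0 ≤ L * α (j + 1) ^ 2 by positivity)
  linarith
end
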